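/- Let v, w ∈ ℂ^m ⊗ ℂ^n be unit vectors with Schmidt coefficients α₁ ≥ α₂ ≥ … and β₁ ≥ β₂ ≥ … respectively, and fix 1 ≤ k ≤ min(m,n). Let r be the largest index with 1 ≤ r < k such that α_r > (Σ_{i=r+1}^{min(m,n)} α_i)/(k−r) (r = 0 if none exists) and set α̃ := (Σ_{i=r+1}^{min(m,n)} α_i)/(k−r); define s and β̃ analogously for the β_i. Then ‖|v⟩⟨w|‖_{γ,k} = sqrt( Σ_{i=1}^r α_i² + (k−r)α̃² ) · sqrt( Σ_{i=1}^s β_i² + (k−s)β̃² ). -/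

import Mathlib

open scoped Kronecker ComplexOrder
open Matrix

namespace Ent

variable {ι κ : Type*} [Fintype ι] [Fintype κ]

/-- Inner product ⟨v,w⟩ = Σᵢ conj(v i) * (w i) (conjugate-linear in the first argument). -/
noncomputable def vinner (v w : ι → ℂ) : ℂ := dotProduct (star v) w

/-- An elementary (product) tensor a ⊗ b in ℂ^ι ⊗ ℂ^κ. -/
def prodVec (a : ι → ℂ) (b : κ → ℂ) : ι × κ → ℂ := fun p => a p.1 * b p.2

/-- `v` has Schmidt rank at most `k`. -/
def SchmidtRankLE (k : ℕ) (v : ι × κ → ℂ) : Prop :=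
  ∃ (a : Fin k → ι → ℂ) (b : Fin k → κ → ℂ), v = ∑ i, prodVec (a i) (b i)

/-- The rank-one operator |v⟩⟨w|. -/
noncomputable def ketBra (v : ι → ℂ) (w : κ → ℂ) : Matrix ι κ ℂ :=
  Matrix.vecMulVec v (star w)

/-- A finite family of vectors is orthonormal. -/
def Orthonormal' {N : Type*} [DecidableEq N] (v : N → ι → ℂ) : Prop :=
  ∀ i j, vinner (v i) (v j) = if i = j then 1 else 0

/-- The S(k)-norm of `X ∈ M_ι ⊗ M_κ`. -/
noncomputable def SkNorm (k : ℕ) (X : Matrix (ι × κ) (ι × κ) ℂ) : ℝ :=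
  sSup { r | ∃ v w : ι × κ → ℂ, vinner v v = 1 ∧ vinner w w = 1 ∧
    SchmidtRankLE k v ∧ SchmidtRankLE k w ∧
    r = ‖vinner v (X.mulVec w)‖ }

/-- The product numerical radius r_k^⊗. -/
noncomputable def prodRad (k : ℕ) (Y : Matrix (ι × κ) (ι × κ) ℂ) : ℝ :=
  sSup { r | ∃ v : ι × κ → ℂ, vinner v v = 1 ∧ SchmidtRankLE k v ∧
    r = ‖vinner v (Y.mulVec v)‖ }

/-- The norm ‖·‖_{γ,k}. -/
noncomputable def gammaNorm (k : ℕ) (X : Matrix (ι × κ) (ι × κ) ℂ) : ℝ :=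
  sInf { r | ∃ (N : ℕ) (c : Fin N → ℂ) (v w : Fin N → (ι × κ → ℂ)),
    (∀ i, vinner (v i) (v i) = 1 ∧ vinner (w i) (w i) = 1 ∧
      SchmidtRankLE k (v i) ∧ SchmidtRankLE k (w i)) ∧
    X = ∑ i, c i • ketBra (v i) (w i) ∧
    r = ∑ i, ‖c i‖ }

/-- `ρ` is a density matrix. -/
def IsDensity (ρ : Matrix ι ι ℂ) : Prop := ρ.PosSemidef ∧ ρ.trace = 1

/-- `ρ` has Schmidt number at most `k`: it is a convex combination of projections onto
unit vectors of Schmidt rank at most `k`. -/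
def SchmidtNumLE (k : ℕ) (ρ : Matrix (ι × κ) (ι × κ) ℂ) : Prop :=
  ∃ (N : ℕ) (p : Fin N → ℝ) (v : Fin N → (ι × κ → ℂ)),
    (∀ i, 0 ≤ p i ∧ vinner (v i) (v i) = 1 ∧ SchmidtRankLE k (v i)) ∧
    (∑ i, p i) = 1 ∧ ρ = ∑ i, p i • ketBra (v i) (v i)

/-- The robustness norm R_k on Hermitian operators. -/
noncomputable def Rk (k : ℕ) (Y : Matrix (ι × κ) (ι × κ) ℂ) : ℝ :=
  sInf { r | ∃ (c₁ c₂ : ℝ) (ρ₁ ρ₂ : Matrix (ι × κ) (ι × κ) ℂ),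
    0 ≤ c₁ ∧ 0 ≤ c₂ ∧ IsDensity ρ₁ ∧ IsDensity ρ₂ ∧
    SchmidtNumLE k ρ₁ ∧ SchmidtNumLE k ρ₂ ∧
    Y = c₁ • ρ₁ - c₂ • ρ₂ ∧ r = c₁ + c₂ }

/-- `Y` is k-block positive: ⟨v|Y|v⟩ ≥ 0 for every unit vector of Schmidt rank at most `k`. -/
def KBlockPos (k : ℕ) (Y : Matrix (ι × κ) (ι × κ) ℂ) : Prop :=
  ∀ v : ι × κ → ℂ, vinner v v = 1 → SchmidtRankLE k v →
    0 ≤ (vinner v (Y.mulVec v)).re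

/-- Dual of a norm on matrices, w.r.t. the Hilbert–Schmidt inner product ⟨W,X⟩ = Tr(Wᴴ X). -/
noncomputable def dualNormM (f : Matrix ι κ ℂ → ℝ) (X : Matrix ι κ ℂ) : ℝ :=
  sSup { r | ∃ W : Matrix ι κ ℂ, f W ≤ 1 ∧ r = ‖(Wᴴ * X).trace‖ }

/-- Dual of a norm, computed in the real Hilbert space of Hermitian matrices with the
Hilbert–Schmidt inner product ⟨W,Y⟩ = Tr(WY). -/
noncomputable def dualNormHerm (f : Matrix ι ι ℂ → ℝ) (Y : Matrix ι ι ℂ) : ℝ :=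
  sSup { r | ∃ W : Matrix ι ι ℂ, W.IsHermitian ∧ f W ≤ 1 ∧ r = |((W * Y).trace).re| }

/-- The Frobenius norm of a matrix. -/
noncomputable def frobNorm (X : Matrix ι κ ℂ) : ℝ :=
  Real.sqrt (∑ i, ∑ j, Complex.normSq (X i j))

/-- The (k,2)-norm: ‖X‖_{(k,2)} = sup { |Tr(XY)| : rank Y ≤ k, ‖Y‖_F ≤ 1 }. -/
noncomputable def kNorm (k : ℕ) (X : Matrix ι κ ℂ) : ℝ :=
  sSup { r | ∃ Y : Matrix κ ι ℂ, Y.rank ≤ k ∧ frobNorm Y ≤ 1 ∧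
    r = ‖(X * Y).trace‖ }

/-- The trace norm: the sum of the singular values, i.e. of the square roots of the
eigenvalues of Xᴴ X. -/
noncomputable def traceNorm [DecidableEq κ] (X : Matrix ι κ ℂ) : ℝ :=
  ∑ i, Real.sqrt ((Matrix.isHermitian_conjTranspose_mul_self X).eigenvalues i)

/-- The s(k) vector norm: sup of |⟨u,w⟩| over unit vectors u of Schmidt rank at most k. -/
noncomputable def skVecNorm (k : ℕ) (w : ι × κ → ℂ) : ℝ :=
  sSup { r | ∃ u : ι × κ → ℂ, vinner u u = 1 ∧ SchmidtRankLE k u ∧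
    r = ‖vinner u w‖ }

/-- Dual of a norm on vectors. -/
noncomputable def dualNormV (f : (ι × κ → ℂ) → ℝ) (v : ι × κ → ℂ) : ℝ :=
  sSup { r | ∃ w : ι × κ → ℂ, f w ≤ 1 ∧ r = ‖vinner w v‖ }

/-- The realignment map, L(X)_{(i,k),(j,l)} = X_{(i,j),(k,l)}. -/
def realign {m n : ℕ} (X : Matrix (Fin m × Fin n) (Fin m × Fin n) ℂ) :
    Matrix (Fin m × Fin m) (Fin n × Fin n) ℂ :=
  fun p q => X (p.1, q.1) (p.2, q.2)

/-- The projective tensor norm on M_{m,n} ⊗ M_{m,n}. -/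
noncomputable def projNorm {m n : ℕ} (Z : Matrix (Fin m × Fin m) (Fin n × Fin n) ℂ) : ℝ :=
  sInf { r | ∃ (N : ℕ) (A B : Fin N → Matrix (Fin m) (Fin n) ℂ),
    Z = ∑ i, A i ⊗ₖ B i ∧ r = ∑ i, traceNorm (A i) * traceNorm (B i) }


lemma vinner_eq_inner (v w : ι → ℂ) :
    vinner v w = inner ℂ (WithLp.toLp 2 v : EuclideanSpace ℂ ι) (WithLp.toLp 2 w) := by
  rw [EuclideanSpace.inner_toLp_toLp, vinner, dotProduct_comm]

lemma vinner_sum_left {I : Type*} (s : Finset I) (f : I → ι → ℂ) (w : ι → ℂ) :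
    vinner (∑ i ∈ s, f i) w = ∑ i ∈ s, vinner (f i) w := by
  simp [vinner, sum_dotProduct]

lemma vinner_sum_right {I : Type*} (s : Finset I) (f : I → ι → ℂ) (w : ι → ℂ) :
    vinner w (∑ i ∈ s, f i) = ∑ i ∈ s, vinner w (f i) := by
  simp [vinner, dotProduct_sum]

lemma vinner_smul_left (c : ℝ) (v w : ι → ℂ) : vinner (c • v) w = c * vinner v w := by
  simp [vinner, star_smul]

lemma vinner_smul_right (c : ℝ) (v w : ι → ℂ) : vinner v (c • w) = c * vinner v w := by
  simp [vinner]

lemma vinner_csmul_right (c : ℂ) (v w : ι → ℂ) : vinner v (c • w) = c * vinner v w := by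
  simp [vinner]

lemma vinner_conj (v w : ι → ℂ) : star (vinner v w) = vinner w v := by
  simp [vinner, dotProduct, mul_comm]

lemma vinner_prodVec (a c : ι → ℂ) (b d : κ → ℂ) :
    vinner (prodVec a b) (prodVec c d) = vinner a c * vinner b d := by
  simp only [vinner, dotProduct, prodVec, Fintype.sum_prod_type, Pi.star_apply, star_mul',
    Finset.sum_mul_sum]
  refine Finset.sum_congr rfl fun i _ => Finset.sum_congr rfl fun j _ => by ring

lemma vinner_self (v : ι → ℂ) :
    vinner v v = ((‖(WithLp.toLp 2 v : EuclideanSpace ℂ ι)‖ ^ 2 : ℝ) : ℂ) := by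
  rw [vinner_eq_inner, inner_self_eq_norm_sq_to_K]; push_cast; rfl

lemma bessel {I : Type*} [DecidableEq I] (s : Finset I) (e : I → ι → ℂ)
    (he : ∀ i ∈ s, ∀ j ∈ s, vinner (e i) (e j) = if i = j then 1 else 0) (y : ι → ℂ) :
    ∑ i ∈ s, ‖vinner (e i) y‖ ^ 2 ≤ (vinner y y).re := by
  have ho : Orthonormal ℂ (fun i : s => (WithLp.toLp 2 (e i) : EuclideanSpace ℂ ι)) := by
    rw [orthonormal_iff_ite]
    intro i j
    rw [← vinner_eq_inner, he i i.2 j j.2]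
    by_cases h : i = j
    · subst h; simp
    · rw [if_neg h, if_neg (fun h' => h (Subtype.ext h'))]
  have := ho.sum_inner_products_le (s := Finset.univ) (WithLp.toLp 2 y : EuclideanSpace ℂ ι)
  rw [vinner_self, Complex.ofReal_re, ← Finset.sum_coe_sort]
  simpa only [vinner_eq_inner] using this

lemma weights {q k : ℕ} (hk1 : 1 ≤ k) (hk : k ≤ q) (f p : ℕ → ℝ)
    (hf0 : ∀ i, i < q → 0 ≤ f i) (hf : ∀ i j, i ≤ j → j < q → f j ≤ f i)
    (hp0 : ∀ i, i < q → 0 ≤ p i) (hp1 : ∀ i, i < q → p i ≤ 1)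
    (hp : ∑ i ∈ Finset.range q, p i ≤ k) :
    ∑ i ∈ Finset.range q, f i * p i ≤ ∑ i ∈ Finset.range k, f i := by
  set c := f (k - 1)
  have hc : 0 ≤ c := hf0 _ (by omega)
  have h1 : ∑ i ∈ Finset.range q, (f i - c) * p i ≤ ∑ i ∈ Finset.range k, (f i - c) := by
    rw [← Finset.sum_range_add_sum_Ico _ hk]
    have h2 : ∑ i ∈ Finset.range k, (f i - c) * p i ≤ ∑ i ∈ Finset.range k, (f i - c) := by
      refine Finset.sum_le_sum fun i hi => ?_
      have hi := Finset.mem_range.1 hi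
      have := hf i (k - 1) (by omega) (by omega)
      exact mul_le_of_le_one_right (by simpa [c] using this) (hp1 i (by omega))
    have h3 : ∑ i ∈ Finset.Ico k q, (f i - c) * p i ≤ 0 := by
      refine Finset.sum_nonpos fun i hi => ?_
      have hi := Finset.mem_Ico.1 hi
      have := hf (k - 1) i (by omega) (by omega)
      exact mul_nonpos_of_nonpos_of_nonneg (by simpa [c] using this) (hp0 i (by omega))
    linarith
  simp only [sub_mul, Finset.sum_sub_distrib, ← Finset.mul_sum, Finset.sum_const,
    Finset.card_range, nsmul_eq_mul] at h1
  nlinarith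

lemma schmidt_orth {k : ℕ} (u : ι × κ → ℂ) (hu : SchmidtRankLE k u) :
    ∃ (d : ℕ) (f : Fin d → ι → ℂ) (g : Fin d → κ → ℂ), d ≤ k ∧
      (∀ i j, vinner (f i) (f j) = if i = j then 1 else 0) ∧
      u = ∑ l, prodVec (f l) (g l) := by
  obtain ⟨a, b, rfl⟩ := hu
  let A : Fin k → EuclideanSpace ℂ ι := fun i => WithLp.toLp 2 (a i)
  let V := Submodule.span ℂ (Set.range A)
  let e := stdOrthonormalBasis ℂ V
  refine ⟨Module.finrank ℂ V, fun l => WithLp.ofLp (e l : EuclideanSpace ℂ ι),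
    fun l => ∑ j, (inner ℂ (e l : EuclideanSpace ℂ ι) (A j)) • b j, ?_, ?_, ?_⟩
  · have h := finrank_range_le_card (R := ℂ) A
    rw [Fintype.card_fin] at h
    exact h
  · intro i j
    rw [vinner_eq_inner]
    have := orthonormal_iff_ite.1 e.orthonormal i j
    simpa using this
  · have hA : ∀ j, a j = ∑ l, (inner ℂ (e l : EuclideanSpace ℂ ι) (A j)) •
        WithLp.ofLp (e l : EuclideanSpace ℂ ι) := by
      intro j
      have h := e.sum_repr' ⟨A j, Submodule.subset_span ⟨j, rfl⟩⟩
      have h2 := congrArg (fun z : V => WithLp.ofLp (z : EuclideanSpace ℂ ι)) h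
      simp only [Submodule.coe_inner] at h2
      rw [show a j = WithLp.ofLp (A j) from rfl, ← h2]
      simp
    ext ⟨x, y⟩
    simp only [Finset.sum_apply, prodVec, Pi.smul_apply, smul_eq_mul]
    conv_lhs => enter [2, j]; rw [hA j]
    simp only [Finset.sum_apply, Pi.smul_apply, smul_eq_mul, Finset.sum_mul, Finset.mul_sum]
    rw [Finset.sum_comm]
    refine Finset.sum_congr rfl fun i _ => Finset.sum_congr rfl fun j _ => by ring

lemma witness_bound {q k : ℕ} (hk1 : 1 ≤ k) (hk : k ≤ q) (η : ℕ → ℝ)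
    (a : ℕ → ι → ℂ) (b : ℕ → κ → ℂ)
    (hη0 : ∀ i, i < q → 0 ≤ η i) (hη : ∀ i j, i ≤ j → j < q → η j ≤ η i)
    (ha : ∀ i j, i < q → j < q → vinner (a i) (a j) = if i = j then 1 else 0)
    (hb : ∀ i j, i < q → j < q → vinner (b i) (b j) = if i = j then 1 else 0)
    (u : ι × κ → ℂ) (hu : SchmidtRankLE k u) (hu1 : vinner u u = 1) :
    ‖vinner (∑ i ∈ Finset.range q, η i • prodVec (a i) (b i)) u‖ ≤
      Real.sqrt (∑ i ∈ Finset.range k, η i ^ 2) := by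
  obtain ⟨d, f, g, hd, hf, rfl⟩ := schmidt_orth u hu
  have hg : ∑ l, (vinner (g l) (g l)).re = 1 := by
    have := congrArg Complex.re hu1
    simpa [vinner_sum_left, vinner_sum_right, vinner_prodVec, hf] using this
  have hexp : vinner (∑ i ∈ Finset.range q, η i • prodVec (a i) (b i))
      (∑ l, prodVec (f l) (g l)) =
      ∑ z ∈ Finset.range q ×ˢ (Finset.univ : Finset (Fin d)),
        (η z.1 * vinner (a z.1) (f z.2)) * vinner (b z.1) (g z.2) := by
    rw [Finset.sum_product, vinner_sum_left]
    refine Finset.sum_congr rfl fun i _ => ?_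
    rw [vinner_sum_right]
    refine Finset.sum_congr rfl fun l _ => ?_
    rw [vinner_smul_left, vinner_prodVec, mul_assoc]
  set S := Finset.range q ×ˢ (Finset.univ : Finset (Fin d)) with hS
  have h1 : ‖vinner (∑ i ∈ Finset.range q, η i • prodVec (a i) (b i))
      (∑ l, prodVec (f l) (g l))‖ ≤ ∑ z ∈ S,
        ‖(η z.1 : ℂ) * vinner (a z.1) (f z.2)‖ * ‖vinner (b z.1) (g z.2)‖ := by
    rw [hexp]
    refine (norm_sum_le _ _).trans (le_of_eq ?_)
    exact Finset.sum_congr rfl fun z _ => norm_mul _ _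
  have hB : ∑ z ∈ S, ‖vinner (b z.1) (g z.2)‖ ^ 2 ≤ 1 := by
    rw [hS, Finset.sum_product_right]
    refine le_trans (Finset.sum_le_sum fun l _ => ?_) hg.le
    exact bessel (Finset.range q) b (fun i hi j hj => hb i j (Finset.mem_range.1 hi) (Finset.mem_range.1 hj)) (g l)
  have hA : ∑ z ∈ S, ‖(η z.1 : ℂ) * vinner (a z.1) (f z.2)‖ ^ 2 ≤
      ∑ i ∈ Finset.range k, η i ^ 2 := by
    have : ∑ z ∈ S, ‖(η z.1 : ℂ) * vinner (a z.1) (f z.2)‖ ^ 2 =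
        ∑ i ∈ Finset.range q, η i ^ 2 * ∑ l, ‖vinner (a i) (f l)‖ ^ 2 := by
      rw [hS, Finset.sum_product]
      refine Finset.sum_congr rfl fun i _ => ?_
      rw [Finset.mul_sum]
      refine Finset.sum_congr rfl fun l _ => ?_
      rw [norm_mul, mul_pow, Complex.norm_real, Real.norm_eq_abs, sq_abs]
    rw [this]
    refine weights hk1 hk (fun i => η i ^ 2) (fun i => ∑ l, ‖vinner (a i) (f l)‖ ^ 2)
      (fun i _ => sq_nonneg _) (fun i j hij hj => pow_le_pow_left₀ (hη0 j hj) (hη i j hij hj) 2)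
      (fun i _ => Finset.sum_nonneg fun _ _ => sq_nonneg _) ?_ ?_
    · intro i hi
      have h := bessel Finset.univ f (fun i _ j _ => hf i j) (a i)
      rw [ha i i hi hi] at h
      simp only [if_true, Complex.one_re] at h
      refine le_trans (le_of_eq ?_) h
      refine Finset.sum_congr rfl fun l _ => ?_
      rw [← vinner_conj, norm_star]
    · rw [Finset.sum_comm]
      have : ∀ l ∈ (Finset.univ : Finset (Fin d)),
          ∑ i ∈ Finset.range q, ‖vinner (a i) (f l)‖ ^ 2 ≤ 1 := by
        intro l _
        have h := bessel (Finset.range q) a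
          (fun i hi j hj => ha i j (Finset.mem_range.1 hi) (Finset.mem_range.1 hj)) (f l)
        rw [hf l l] at h
        simpa using h
      refine (Finset.sum_le_sum this).trans ?_
      simpa using hd
  refine h1.trans ?_
  refine (Real.sum_mul_le_sqrt_mul_sqrt _ _ _).trans ?_
  calc _ ≤ Real.sqrt (∑ i ∈ Finset.range k, η i ^ 2) * Real.sqrt 1 := by gcongr
    _ = _ := by simp

lemma hypersimplex {q k : ℕ} (hk1 : 1 ≤ k) (hk : k ≤ q) (t : Fin q → ℝ)
    (h0 : ∀ i, 0 ≤ t i) (h1 : ∀ i, t i ≤ 1) (hs : ∑ i, t i = k) :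
    ∃ w : Equiv.Perm (Fin q) → ℝ, (∀ σ, 0 ≤ w σ) ∧ ∑ σ, w σ = 1 ∧
      ∀ i, t i = ∑ σ, w σ * (if ((σ i : Fin q) : ℕ) < k then 1 else 0) := by
  have hkp : (0 : ℝ) < k := by exact_mod_cast hk1
  have hkq : (k : ℝ) ≤ q := by exact_mod_cast hk
  have c1 : (∑ j : Fin q, if (j : ℕ) < k then (1 : ℝ) else 0) = k := by
    rw [Fin.sum_univ_eq_sum_range (fun j => if j < k then (1 : ℝ) else 0) q,
      ← Finset.sum_filter]
    have : (Finset.range q).filter (· < k) = Finset.range k := by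
      ext x; simp; omega
    rw [this]; simp
  have c2 : (∑ j : Fin q, if (j : ℕ) < k then (0 : ℝ) else 1) = q - k := by
    have : ∀ j : Fin q, (if (j : ℕ) < k then (0 : ℝ) else 1) =
        1 - (if (j : ℕ) < k then (1 : ℝ) else 0) := by
      intro j; split_ifs <;> simp
    simp only [this, Finset.sum_sub_distrib, c1]
    simp
  have hq1 : (q : ℝ) - k = 0 → ∀ i, 1 - t i = 0 := by
    intro hq i
    have : ∑ i, (1 - t i) = 0 := by
      rw [Finset.sum_sub_distrib, hs]; simpa using hq
    exact (Finset.sum_eq_zero_iff_of_nonneg (fun i _ => sub_nonneg.2 (h1 i))).1 this i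
      (Finset.mem_univ _)
  let M : Matrix (Fin q) (Fin q) ℝ := fun i j =>
    (if (j : ℕ) < k then 1 else 0) * (t i / k) + (if (j : ℕ) < k then 0 else 1) *
      ((1 - t i) / (q - k))
  have hM : M ∈ doublyStochastic ℝ (Fin q) := by
    rw [mem_doublyStochastic_iff_sum]
    refine ⟨?_, ?_, ?_⟩
    · intro i j
      have := h0 i
      have h1' := h1 i
      have : 0 ≤ (1 - t i) / ((q : ℝ) - k) := div_nonneg (by linarith) (by linarith)
      have : 0 ≤ t i / k := by positivity
      simp only [M]
      split_ifs <;> simpa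
    · intro i
      simp only [M, Finset.sum_add_distrib, ← Finset.sum_mul, c1, c2]
      rw [mul_div_cancel₀ _ hkp.ne']
      by_cases hq : (q : ℝ) - k = 0
      · rw [hq]; have := hq1 hq i; simp; linarith
      · rw [mul_div_cancel₀ _ hq]; ring
    · intro j
      simp only [M, Finset.sum_add_distrib, ← Finset.mul_sum, ← Finset.sum_div,
        Finset.sum_sub_distrib, hs]
      simp only [Finset.sum_const, Finset.card_univ, Fintype.card_fin, nsmul_eq_mul, mul_one]
      split_ifs with hj
      · rw [div_self hkp.ne']; ring
      · have : (q : ℝ) - k ≠ 0 := by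
          have h : k < q := by omega
          have : (k : ℝ) < q := by exact_mod_cast h
          linarith
        rw [div_self this]; ring
  obtain ⟨w, hw0, hw1, hwM⟩ := exists_eq_sum_perm_of_mem_doublyStochastic hM
  refine ⟨w, hw0, hw1, fun i => ?_⟩
  have e1 : t i = ∑ j : Fin q, M i j * (if (j : ℕ) < k then 1 else 0) := by
    have : ∀ j : Fin q, M i j * (if (j : ℕ) < k then 1 else 0) =
        (if (j : ℕ) < k then 1 else 0) * (t i / k) := by
      intro j; simp only [M]; split_ifs <;> simp
    simp only [this, ← Finset.sum_mul, c1]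
    rw [mul_div_cancel₀ _ hkp.ne']
  rw [e1, ← hwM]
  simp only [Matrix.sum_apply, Matrix.smul_apply, smul_eq_mul, Finset.sum_mul]
  rw [Finset.sum_comm]
  refine Finset.sum_congr rfl fun σ _ => ?_
  rw [Finset.sum_eq_single (σ i)]
  · simp [Equiv.Perm.permMatrix, PEquiv.toMatrix_apply]
  · intro j _ hj
    simp [Equiv.Perm.permMatrix, PEquiv.toMatrix_apply, hj.symm]
  · simp

lemma normalise {k : ℕ} (e y : ι × κ → ℂ) (he : SchmidtRankLE k e) (he1 : vinner e e = 1)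
    (hy : SchmidtRankLE k y) :
    ∃ (c : ℂ) (z : ι × κ → ℂ), vinner z z = 1 ∧ SchmidtRankLE k z ∧ y = c • z ∧
      ‖c‖ = Real.sqrt (vinner y y).re := by
  by_cases h0 : y = 0
  · refine ⟨0, e, he1, he, by simp [h0], ?_⟩
    simp [h0, vinner]
  · set N := ‖(WithLp.toLp 2 y : EuclideanSpace ℂ (ι × κ))‖ with hN
    have hNpos : 0 < N := by
      rw [hN, norm_pos_iff]
      intro h; apply h0
      simpa using congrArg WithLp.ofLp h
    refine ⟨(N : ℂ), N⁻¹ • y, ?_, ?_, ?_, ?_⟩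
    · rw [vinner_smul_left, vinner_smul_right, vinner_self, ← hN]
      norm_cast
      field_simp
    · obtain ⟨a, b, rfl⟩ := hy
      refine ⟨fun i => N⁻¹ • a i, b, ?_⟩
      rw [Finset.smul_sum]
      refine Finset.sum_congr rfl fun i _ => ?_
      ext p; simp [prodVec, mul_assoc]
    · ext p; simp [hNpos.ne']
    · rw [vinner_self, ← hN, Complex.ofReal_re, Real.sqrt_sq hNpos.le]
      simp [hNpos.le]

lemma sum_perm_conv {E : Type*} [AddCommMonoid E] {q k : ℕ} (hk : k ≤ q)
    (σ : Equiv.Perm (Fin q)) (F : ℕ → E) :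
    ∑ l : Fin k, F (σ.symm (Fin.castLE hk l)) =
      ∑ i : Fin q, if ((σ i : Fin q) : ℕ) < k then F i else 0 := by
  rw [← Equiv.sum_comp σ.symm]
  simp only [Equiv.apply_symm_apply]
  rw [← Finset.sum_filter]
  refine Finset.sum_bij (fun l _ => Fin.castLE hk l) ?_ ?_ ?_ ?_
  · intro l _; simp
  · intro l _ l' _ h; simpa using h
  · intro j hj
    simp only [Finset.mem_filter, Finset.mem_univ, true_and] at hj
    exact ⟨⟨j, hj⟩, Finset.mem_univ _, by ext; simp⟩
  · intro l _; rfl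

lemma decompose {q k : ℕ} (hk1 : 1 ≤ k) (hk : k ≤ q) (η t : ℕ → ℝ)
    (a : ℕ → ι → ℂ) (b : ℕ → κ → ℂ)
    (hη0 : ∀ i, i < q → 0 ≤ η i) (hη : ∀ i j, i ≤ j → j < q → η j ≤ η i)
    (ht0 : ∀ i, i < q → 0 ≤ t i) (ht1 : ∀ i, i < q → t i ≤ 1)
    (hts : ∑ i ∈ Finset.range q, t i = k)
    (ha : ∀ i j, i < q → j < q → vinner (a i) (a j) = if i = j then 1 else 0)
    (hb : ∀ i j, i < q → j < q → vinner (b i) (b j) = if i = j then 1 else 0) :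
    ∃ (c : Equiv.Perm (Fin q) → ℂ) (z : Equiv.Perm (Fin q) → ι × κ → ℂ),
      (∀ σ, vinner (z σ) (z σ) = 1 ∧ SchmidtRankLE k (z σ)) ∧
      ∑ i ∈ Finset.range q, (η i * t i) • prodVec (a i) (b i) = ∑ σ, c σ • z σ ∧
      ∑ σ, ‖c σ‖ ≤ Real.sqrt (∑ i ∈ Finset.range k, η i ^ 2) := by
  have he1 : vinner (prodVec (a 0) (b 0)) (prodVec (a 0) (b 0)) = 1 := by
    rw [vinner_prodVec, ha 0 0 (by omega) (by omega), hb 0 0 (by omega) (by omega)]; simp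
  have he : SchmidtRankLE k (prodVec (a 0) (b 0)) := by
    refine ⟨fun i => if i = ⟨0, hk1⟩ then a 0 else 0, fun _ => b 0, ?_⟩
    ext p
    simp only [Finset.sum_apply, prodVec]
    rw [Finset.sum_eq_single ⟨0, hk1⟩]
    · simp
    · intro j _ hj; simp [hj]
    · simp
  obtain ⟨w, hw0, hw1, hw⟩ := hypersimplex hk1 hk (fun i : Fin q => t i) (fun i => ht0 i i.2)
    (fun i => ht1 i i.2) (by rw [Fin.sum_univ_eq_sum_range]; exact hts)
  let y : Equiv.Perm (Fin q) → ι × κ → ℂ := fun σ => ∑ l : Fin k,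
    η (σ.symm (Fin.castLE hk l)) • prodVec (a (σ.symm (Fin.castLE hk l)))
      (b (σ.symm (Fin.castLE hk l)))
  have hyr : ∀ σ, SchmidtRankLE k (y σ) := by
    intro σ
    refine ⟨fun l => η (σ.symm (Fin.castLE hk l)) • a (σ.symm (Fin.castLE hk l)),
      fun l => b (σ.symm (Fin.castLE hk l)), ?_⟩
    refine Finset.sum_congr rfl fun i _ => ?_
    ext p; simp [prodVec, mul_assoc]
  have hyn : ∀ σ, (vinner (y σ) (y σ)).re ≤ ∑ i ∈ Finset.range k, η i ^ 2 := by
    intro σ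
    have e1 : vinner (y σ) (y σ) =
        ((∑ l : Fin k, η (σ.symm (Fin.castLE hk l)) ^ 2 : ℝ) : ℂ) := by
      simp only [y, vinner_sum_left, vinner_sum_right, vinner_smul_left, vinner_smul_right,
        vinner_prodVec]
      have : ∀ l l' : Fin k, vinner (a (σ.symm (Fin.castLE hk l))) (a (σ.symm (Fin.castLE hk l')))
          = if l = l' then 1 else 0 := by
        intro l l'
        rw [ha _ _ (Fin.is_lt _) (Fin.is_lt _)]
        simp [Fin.val_inj]
      have h' : ∀ l l' : Fin k, vinner (b (σ.symm (Fin.castLE hk l))) (b (σ.symm (Fin.castLE hk l')))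
          = if l = l' then 1 else 0 := by
        intro l l'
        rw [hb _ _ (Fin.is_lt _) (Fin.is_lt _)]
        simp [Fin.val_inj]
      simp only [this, h']
      simp [pow_two]
    rw [e1, Complex.ofReal_re, sum_perm_conv hk σ (fun i => η i ^ 2)]
    let p : ℕ → ℝ := fun i => if h : i < q then (if ((σ ⟨i, h⟩ : Fin q) : ℕ) < k then 1 else 0) else 0
    have hpF : ∀ i : Fin q, p i = if ((σ i : Fin q) : ℕ) < k then 1 else 0 := by
      intro i; simp [p]
    have := weights hk1 hk (fun i => η i ^ 2) p (fun i _ => sq_nonneg _)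
      (fun i j hij hj => pow_le_pow_left₀ (hη0 j hj) (hη i j hij hj) 2)
      (fun i hi => by simp only [p]; split_ifs <;> norm_num)
      (fun i hi => by simp only [p]; split_ifs <;> norm_num) ?_
    · refine le_trans (le_of_eq ?_) this
      rw [← Fin.sum_univ_eq_sum_range (fun i => η i ^ 2 * p i)]
      refine Finset.sum_congr rfl fun i _ => ?_
      rw [hpF]; simp
    · rw [← Fin.sum_univ_eq_sum_range p]
      simp only [hpF]
      have := sum_perm_conv hk σ (fun _ => (1 : ℝ))
      rw [← this]; simp
  choose c z hz1 hzr hyz hc using fun σ => normalise (prodVec (a 0) (b 0)) (y σ) he he1 (hyr σ)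
  refine ⟨fun σ => (w σ : ℂ) * c σ, z, fun σ => ⟨hz1 σ, hzr σ⟩, ?_, ?_⟩
  · have e2 : ∀ σ, ((w σ : ℂ) * c σ) • z σ = w σ • y σ := by
      intro σ; rw [mul_smul, ← hyz]; ext p; simp
    simp only [e2]
    have e3 : ∀ σ, y σ = ∑ i : Fin q, if ((σ i : Fin q) : ℕ) < k then
        η i • prodVec (a i) (b i) else 0 := fun σ => sum_perm_conv hk σ (fun i => η i • prodVec (a i) (b i))
    simp only [e3, Finset.smul_sum]
    rw [Finset.sum_comm, ← Fin.sum_univ_eq_sum_range (fun i => (η i * t i) • prodVec (a i) (b i))]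
    refine Finset.sum_congr rfl fun i _ => ?_
    have := hw i
    rw [this, Finset.mul_sum, Finset.sum_smul]
    refine Finset.sum_congr rfl fun σ _ => ?_
    split_ifs
    · rw [smul_smul]; congr 1; ring
    · simp
  · calc ∑ σ, ‖(w σ : ℂ) * c σ‖ ≤ ∑ σ, w σ * Real.sqrt (∑ i ∈ Finset.range k, η i ^ 2) := by
          refine Finset.sum_le_sum fun σ _ => ?_
          rw [norm_mul, Complex.norm_real, Real.norm_of_nonneg (hw0 σ), hc]
          exact mul_le_mul_of_nonneg_left (Real.sqrt_le_sqrt (hyn σ)) (hw0 σ)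
      _ = _ := by rw [← Finset.sum_mul, hw1, one_mul]

/-- Both halves for one vector: a decomposition and a dual witness. -/
lemma one_side {q k : ℕ} (hk1 : 1 ≤ k) (hk : k ≤ q) (v : ι × κ → ℂ)
    (α : ℕ → ℝ) (a : ℕ → ι → ℂ) (b : ℕ → κ → ℂ)
    (hα0 : ∀ i, i < q → 0 ≤ α i)
    (hαmono : ∀ i j, i ≤ j → j < q → α j ≤ α i)
    (ha : ∀ i j, i < q → j < q → vinner (a i) (a j) = if i = j then 1 else 0)
    (hb : ∀ i j, i < q → j < q → vinner (b i) (b j) = if i = j then 1 else 0)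
    (hvdec : v = ∑ i ∈ Finset.range q, α i • prodVec (a i) (b i))
    (r : ℕ) (hrk : r < k)
    (hr : 1 ≤ r → (∑ i ∈ Finset.Ico r q, α i) / ((k : ℝ) - r) < α (r - 1))
    (hrmax : ∀ j, r < j → j < k →
      ¬ ((∑ i ∈ Finset.Ico j q, α i) / ((k : ℝ) - j) < α (j - 1)))
    (F : ℝ) (hF : F = Real.sqrt ((∑ i ∈ Finset.range r, α i ^ 2) +
        ((k : ℝ) - r) * ((∑ i ∈ Finset.Ico r q, α i) / ((k : ℝ) - r)) ^ 2)) :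
    (∃ (c : Equiv.Perm (Fin q) → ℂ) (z : Equiv.Perm (Fin q) → ι × κ → ℂ),
      (∀ σ, vinner (z σ) (z σ) = 1 ∧ SchmidtRankLE k (z σ)) ∧
      v = ∑ σ, c σ • z σ ∧ ∑ σ, ‖c σ‖ ≤ F) ∧
    ∃ x : ι × κ → ℂ, vinner x v = ((F ^ 2 : ℝ) : ℂ) ∧
      ∀ u, SchmidtRankLE k u → vinner u u = 1 → ‖vinner x u‖ ≤ F := by
  have hkr : (0 : ℝ) < (k : ℝ) - r := by
    have : (r : ℝ) < k := by exact_mod_cast hrk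
    linarith
  set T := ∑ i ∈ Finset.Ico r q, α i with hT
  set A := T / ((k : ℝ) - r) with hA
  have hTA : T = ((k : ℝ) - r) * A := by rw [hA]; field_simp
  have hT0 : 0 ≤ T := Finset.sum_nonneg fun i hi => hα0 i (Finset.mem_Ico.1 hi).2
  have hA0 : 0 ≤ A := div_nonneg hT0 hkr.le
  have hTr : T = α r + ∑ i ∈ Finset.Ico (r + 1) q, α i :=
    Finset.sum_eq_sum_Ico_succ_bot (by omega) _
  have hαA : α r ≤ A := by
    rcases Nat.lt_or_ge (r + 1) k with h | h
    · have h2 := not_lt.1 (hrmax (r + 1) (by omega) h)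
      have hp : (0 : ℝ) < (k : ℝ) - (r + 1 : ℕ) := by
        have : ((r + 1 : ℕ) : ℝ) < k := by exact_mod_cast h
        linarith
      rw [le_div_iff₀ hp] at h2
      rw [hA, le_div_iff₀ hkr]
      simp only [Nat.add_sub_cancel] at h2
      push_cast at h2
      linarith
    · have : k = r + 1 := by omega
      have h1 : (k : ℝ) - r = 1 := by rw [this]; push_cast; ring
      have : 0 ≤ ∑ i ∈ Finset.Ico (r + 1) q, α i :=
        Finset.sum_nonneg fun i hi => hα0 i (Finset.mem_Ico.1 hi).2
      rw [hA, h1, div_one]; linarith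
  have hαA' : ∀ i, r ≤ i → i < q → α i ≤ A := fun i h1 h2 => (hαmono r i h1 h2).trans hαA
  let η : ℕ → ℝ := fun i => if i < r then α i else A
  have hη1 : ∀ i, i < r → η i = α i := fun i hi => by simp [η, hi]
  have hη2 : ∀ i, r ≤ i → η i = A := fun i hi => by simp [η, not_lt.2 hi]
  have hη0 : ∀ i, i < q → 0 ≤ η i := by
    intro i hi; simp only [η]; split_ifs
    · exact hα0 i hi
    · exact hA0
  have hη : ∀ i j, i ≤ j → j < q → η j ≤ η i := by
    intro i j hij hj
    rcases Nat.lt_or_ge j r with h | h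
    · rw [hη1 j h, hη1 i (by omega)]; exact hαmono i j hij hj
    · rw [hη2 j h]
      rcases Nat.lt_or_ge i r with h' | h'
      · rw [hη1 i h']
        exact (hr (by omega)).le.trans (hαmono i (r - 1) (by omega) (by omega))
      · rw [hη2 i h']
  have hsum : ∑ i ∈ Finset.range k, η i ^ 2 =
      (∑ i ∈ Finset.range r, α i ^ 2) + ((k : ℝ) - r) * A ^ 2 := by
    rw [← Finset.sum_range_add_sum_Ico _ hrk.le]
    congr 1
    · exact Finset.sum_congr rfl fun i hi => by rw [hη1 i (Finset.mem_range.1 hi)]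
    · rw [Finset.sum_congr rfl (g := fun _ => A ^ 2)
        fun i hi => by rw [hη2 i (Finset.mem_Ico.1 hi).1]]
      simp [Nat.cast_sub hrk.le]
  have hFη : F = Real.sqrt (∑ i ∈ Finset.range k, η i ^ 2) := by rw [hF, hsum]
  have hF2 : F ^ 2 = ∑ i ∈ Finset.range k, η i ^ 2 := by
    rw [hFη, Real.sq_sqrt (Finset.sum_nonneg fun _ _ => sq_nonneg _)]
  constructor
  · obtain ⟨t, ht0, ht1, hts, htα⟩ : ∃ t : ℕ → ℝ, (∀ i, i < q → 0 ≤ t i) ∧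
        (∀ i, i < q → t i ≤ 1) ∧ (∑ i ∈ Finset.range q, t i = k) ∧
        ∀ i, i < q → η i * t i = α i := by
      rcases hA0.eq_or_lt with h | h
      · refine ⟨fun i => if i < k then 1 else 0, fun i _ => by beta_reduce; split_ifs <;> norm_num,
          fun i _ => by beta_reduce; split_ifs <;> norm_num, ?_, ?_⟩
        · rw [← Finset.sum_filter]
          have : (Finset.range q).filter (· < k) = Finset.range k := by
            ext x; simp; omega
          rw [this]; simp
        · intro i hi
          rcases Nat.lt_or_ge i r with h' | h'
          · simp [hη1 i h', h'.trans hrk]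
          · have h1 := hαA' i h' hi
            have h2 := hα0 i hi
            rw [hη2 i h', ← h, zero_mul]; linarith
      · refine ⟨fun i => if i < r then 1 else α i / A, ?_, ?_, ?_, ?_⟩
        · intro i hi
          have := hα0 i hi
          simp only; split_ifs <;> positivity
        · intro i hi
          simp only; split_ifs with h'
          · norm_num
          · exact (div_le_one h).2 (hαA' i (not_lt.1 h') hi)
        · rw [← Finset.sum_range_add_sum_Ico _ (hrk.le.trans hk)]
          rw [Finset.sum_congr rfl (g := fun _ => (1 : ℝ))
            fun i hi => by rw [if_pos (Finset.mem_range.1 hi)]]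
          rw [Finset.sum_congr (s₁ := Finset.Ico r q) rfl (g := fun i => α i / A)
            fun i hi => by rw [if_neg (not_lt.2 (Finset.mem_Ico.1 hi).1)]]
          rw [← Finset.sum_div, ← hT, hTA, mul_div_cancel_right₀ _ h.ne']
          simp
        · intro i hi
          rcases Nat.lt_or_ge i r with h' | h'
          · simp [hη1 i h', h']
          · simp only [hη2 i h', not_lt.2 h', if_false]
            field_simp
    obtain ⟨c, z, hz, hd, hc⟩ := decompose hk1 hk η t a b hη0 hη ht0 ht1 hts ha hb
    refine ⟨c, z, hz, ?_, hFη ▸ hc⟩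
    rw [← hd, hvdec]
    exact Finset.sum_congr rfl fun i hi => by rw [htα i (Finset.mem_range.1 hi)]
  · refine ⟨∑ i ∈ Finset.range q, η i • prodVec (a i) (b i), ?_, ?_⟩
    · have e1 : vinner (∑ i ∈ Finset.range q, η i • prodVec (a i) (b i)) v =
          ((∑ i ∈ Finset.range q, η i * α i : ℝ) : ℂ) := by
        rw [hvdec, vinner_sum_left]
        push_cast
        refine Finset.sum_congr rfl fun i hi => ?_
        have hi' := Finset.mem_range.1 hi
        rw [vinner_sum_right, Finset.sum_eq_single i]
        · rw [vinner_smul_left, vinner_smul_right, vinner_prodVec, ha i i hi' hi', hb i i hi' hi']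
          simp
        · intro j hj hji
          rw [vinner_smul_left, vinner_smul_right, vinner_prodVec,
            ha i j hi' (Finset.mem_range.1 hj)]
          simp [hji.symm]
        · intro h; exact absurd hi h
      rw [e1, hF2, hsum, ← Finset.sum_range_add_sum_Ico _ (hrk.le.trans hk)]
      congr 2
      · exact Finset.sum_congr rfl fun i hi => by rw [hη1 i (Finset.mem_range.1 hi), pow_two]
      · rw [Finset.sum_congr rfl (g := fun i => A * α i)
          fun i hi => by rw [hη2 i (Finset.mem_Ico.1 hi).1]]
        rw [← Finset.mul_sum, ← hT, hTA]; ring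
    · intro u hu hu1
      rw [hFη]
      exact witness_bound hk1 hk η a b hη0 hη ha hb u hu hu1

lemma vinner_ketBra (x y v w : ι → ℂ) :
    vinner x ((ketBra v w).mulVec y) = vinner x v * vinner w y := by
  simp [vinner, ketBra, Matrix.vecMulVec_mulVec, mul_comm]

/-- for unit vectors `v`, `w` with Schmidt coefficients `α` and `β`
respectively (presented via Schmidt decompositions; 0-based indexing), with `r, α̃` defined
from `α` and `s, β̃` defined analogously from `β` as in the paper,
`‖|v⟩⟨w|‖_{γ,k} = sqrt(Σ_{i=1}^r α_i² + (k-r)·α̃²) · sqrt(Σ_{i=1}^s β_i² + (k-s)·β̃²)`. -/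
theorem gammaNorm_of_rankOne {m n k : ℕ} (hk1 : 1 ≤ k) (hk : k ≤ min m n)
    (v w : Fin m × Fin n → ℂ) (hv : vinner v v = 1) (hw : vinner w w = 1)
    (α β : ℕ → ℝ) (a a' : ℕ → Fin m → ℂ) (b b' : ℕ → Fin n → ℂ)
    (hα0 : ∀ i, i < min m n → 0 ≤ α i)
    (hαmono : ∀ i j, i ≤ j → j < min m n → α j ≤ α i)
    (hβ0 : ∀ i, i < min m n → 0 ≤ β i)
    (hβmono : ∀ i j, i ≤ j → j < min m n → β j ≤ β i)
    (ha : ∀ i j, i < min m n → j < min m n → vinner (a i) (a j) = if i = j then 1 else 0)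
    (hb : ∀ i j, i < min m n → j < min m n → vinner (b i) (b j) = if i = j then 1 else 0)
    (ha' : ∀ i j, i < min m n → j < min m n → vinner (a' i) (a' j) = if i = j then 1 else 0)
    (hb' : ∀ i j, i < min m n → j < min m n → vinner (b' i) (b' j) = if i = j then 1 else 0)
    (hvdec : v = ∑ i ∈ Finset.range (min m n), α i • prodVec (a i) (b i))
    (hwdec : w = ∑ i ∈ Finset.range (min m n), β i • prodVec (a' i) (b' i))
    (r : ℕ) (hrk : r < k)
    (hr : 1 ≤ r → (∑ i ∈ Finset.Ico r (min m n), α i) / ((k : ℝ) - r) < α (r - 1))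
    (hrmax : ∀ j, r < j → j < k →
      ¬ ((∑ i ∈ Finset.Ico j (min m n), α i) / ((k : ℝ) - j) < α (j - 1)))
    (s : ℕ) (hsk : s < k)
    (hs : 1 ≤ s → (∑ i ∈ Finset.Ico s (min m n), β i) / ((k : ℝ) - s) < β (s - 1))
    (hsmax : ∀ j, s < j → j < k →
      ¬ ((∑ i ∈ Finset.Ico j (min m n), β i) / ((k : ℝ) - j) < β (j - 1))) :
    gammaNorm k (ketBra v w) =
      Real.sqrt ((∑ i ∈ Finset.range r, α i ^ 2) +
        ((k : ℝ) - r) * ((∑ i ∈ Finset.Ico r (min m n), α i) / ((k : ℝ) - r)) ^ 2) *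
      Real.sqrt ((∑ i ∈ Finset.range s, β i ^ 2) +
        ((k : ℝ) - s) * ((∑ i ∈ Finset.Ico s (min m n), β i) / ((k : ℝ) - s)) ^ 2) := by
  obtain ⟨⟨c, z, hz, hvd, hc⟩, x, hx, hxb⟩ := one_side hk1 hk v α a b hα0 hαmono ha hb hvdec r hrk
    hr hrmax _ rfl
  obtain ⟨⟨c', z', hz', hwd, hc'⟩, y, hy, hyb⟩ := one_side hk1 hk w β a' b' hβ0 hβmono ha' hb'
    hwdec s hsk hs hsmax _ rfl
  set F := Real.sqrt ((∑ i ∈ Finset.range r, α i ^ 2) +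
        ((k : ℝ) - r) * ((∑ i ∈ Finset.Ico r (min m n), α i) / ((k : ℝ) - r)) ^ 2)
  set G := Real.sqrt ((∑ i ∈ Finset.range s, β i ^ 2) +
        ((k : ℝ) - s) * ((∑ i ∈ Finset.Ico s (min m n), β i) / ((k : ℝ) - s)) ^ 2)
  have hF0 : 0 ≤ F := Real.sqrt_nonneg _
  have hG0 : 0 ≤ G := Real.sqrt_nonneg _
  let P := Equiv.Perm (Fin (min m n)) × Equiv.Perm (Fin (min m n))
  let ee : Fin (Fintype.card P) ≃ P := (Fintype.equivFin P).symm
  have hmem : ∃ R, R ≤ F * G ∧ R ∈ { r | ∃ (N : ℕ) (c : Fin N → ℂ)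
      (v' w' : Fin N → (Fin m × Fin n → ℂ)),
      (∀ i, vinner (v' i) (v' i) = 1 ∧ vinner (w' i) (w' i) = 1 ∧
        SchmidtRankLE k (v' i) ∧ SchmidtRankLE k (w' i)) ∧
      ketBra v w = ∑ i, c i • ketBra (v' i) (w' i) ∧
      r = ∑ i, ‖c i‖ } := by
    refine ⟨∑ p : P, ‖c p.1 * star (c' p.2)‖, ?_, Fintype.card P,
      fun i => c (ee i).1 * star (c' (ee i).2), fun i => z (ee i).1, fun i => z' (ee i).2,
      fun i => ⟨(hz _).1, (hz' _).1, (hz _).2, (hz' _).2⟩, ?_, ?_⟩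
    · simp only [norm_mul, norm_star]
      rw [Fintype.sum_prod_type]
      simp only [← Finset.mul_sum, ← Finset.sum_mul]
      exact mul_le_mul hc hc' (Finset.sum_nonneg fun _ _ => norm_nonneg _) hF0
    · rw [Equiv.sum_comp ee (fun p : P => (c p.1 * star (c' p.2)) • ketBra (z p.1) (z' p.2)),
        Fintype.sum_prod_type, hvd, hwd]
      ext i j
      simp only [ketBra, Matrix.vecMulVec_apply, Finset.sum_apply, Pi.smul_apply, smul_eq_mul,
        Pi.star_apply, star_sum, star_mul', Matrix.sum_apply, Matrix.smul_apply,
        Finset.sum_mul_sum]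
      refine Finset.sum_congr rfl fun _ _ => Finset.sum_congr rfl fun _ _ => by ring
    · exact (Equiv.sum_comp ee (fun p : P => ‖c p.1 * star (c' p.2)‖)).symm
  obtain ⟨R, hR, hRm⟩ := hmem
  apply le_antisymm
  · refine (csInf_le ?_ hRm).trans hR
    refine ⟨0, ?_⟩
    rintro _ ⟨N, d, v', w', _, _, rfl⟩
    exact Finset.sum_nonneg fun _ _ => norm_nonneg _
  · refine le_csInf ⟨R, hRm⟩ ?_
    rintro _ ⟨N, d, v', w', h1, h2, rfl⟩
    have hD : 0 ≤ ∑ i, ‖d i‖ := Finset.sum_nonneg fun _ _ => norm_nonneg _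
    have h3 : vinner x ((ketBra v w).mulVec y) = ((F ^ 2 * G ^ 2 : ℝ) : ℂ) := by
      rw [vinner_ketBra, hx, ← vinner_conj y w, hy]
      simp
    have h4 : vinner x ((ketBra v w).mulVec y) =
        ∑ i, d i * (vinner x (v' i) * vinner (w' i) y) := by
      rw [h2, Matrix.sum_mulVec, vinner_sum_right]
      refine Finset.sum_congr rfl fun i _ => ?_
      rw [Matrix.smul_mulVec, vinner_csmul_right, vinner_ketBra]
    have h5 : F ^ 2 * G ^ 2 ≤ (∑ i, ‖d i‖) * (F * G) := by
      have : ‖vinner x ((ketBra v w).mulVec y)‖ = F ^ 2 * G ^ 2 := by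
        rw [h3, Complex.norm_real, Real.norm_of_nonneg (by positivity)]
      rw [← this, h4, Finset.sum_mul]
      refine (norm_sum_le _ _).trans (Finset.sum_le_sum fun i _ => ?_)
      rw [norm_mul, norm_mul]
      refine mul_le_mul_of_nonneg_left ?_ (norm_nonneg _)
      refine mul_le_mul (hxb _ (h1 i).2.2.1 (h1 i).1) ?_ (norm_nonneg _) hF0
      rw [← vinner_conj, norm_star]
      exact hyb _ (h1 i).2.2.2 (h1 i).2.1
    rcases (mul_nonneg hF0 hG0).eq_or_lt with h | h
    · rw [← h]; exact hD
    · refine le_of_mul_le_mul_right ?_ h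
      calc F * G * (F * G) = F ^ 2 * G ^ 2 := by ring
        _ ≤ _ := h5

end Ent
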